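/- Let H ∈ (1/2, 1), q > 0, r > 0, b₁ ∈ ℝ and b₂ ≠ 0, and define L(K) = Γ(2H+1)·(q + r K²) / (2·(-(b₁ + b₂ K))^{2H}) for K in the stabilizing set {K ∈ ℝ : b₁ + b₂ K < 0}, where Γ is the Gamma function. Then the number K̂ = -(b₁ + √(b₁² + 4H(1-H)·b₂²·q/r)) / (2·b₂·(1-H)) satisfies b₁ + b₂ K̂ < 0, and K̂ is a global minimizer of L over the stabilizing set, with minimal value L(K̂) = Γ(2H+1)·(q + r K̂²) / (2·(-(b₁ + b₂ K̂))^{2H}). -/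

import Mathlib

lemma aux_ineq (H b C s p : ℝ) (hH : 1/2 < H) (hH1 : H < 1) (hC : 0 < C) (hs : 0 < s)
    (hp : 0 < p) (hN : 0 < C + 2*b*s + s^2)
    (hcrit : (1-H)*s^2 + (1-2*H)*b*s - H*C = 0) :
    (C + 2*b*s + s^2) / s^(2*H) ≤ (C + 2*b*p + p^2) / p^(2*H) := by
  obtain ⟨t, ht, rfl⟩ : ∃ t, 0 < t ∧ p = s*t := ⟨p/s, by positivity, by field_simp⟩
  have h1 : t^(2*H-1) ≤ 1 + (2*H-1)*(t-1) := by
    have := rpow_one_add_le_one_add_mul_self (s := t-1) (by linarith) (p := 2*H-1)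
      (by linarith) (by linarith)
    simpa using this
  have h2 : t^(2*H) = t * t^(2*H-1) := by
    rw [Real.rpow_sub ht, Real.rpow_one]; field_simp
  have h3 : t^(2*H) ≤ t * (1 + (2*H-1)*(t-1)) := by
    rw [h2]; exact mul_le_mul_of_nonneg_left h1 ht.le
  have h4 : (C + 2*b*s + s^2) * t^(2*H) ≤ C + 2*b*(s*t) + (s*t)^2 := by
    have h5 := mul_le_mul_of_nonneg_left h3 hN.le
    have h6 : C + 2*b*(s*t) + (s*t)^2 - (C + 2*b*s + s^2) * (t * (1 + (2*H-1)*(t-1)))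
        = C*(t-1)^2 := by
      linear_combination (2*t^2 - 2*t) * hcrit
    have : 0 ≤ C*(t-1)^2 := by positivity
    linarith
  rw [Real.mul_rpow hs.le ht.le]
  have hsp := Real.rpow_pos_of_pos hs (2*H)
  have htp := Real.rpow_pos_of_pos ht (2*H)
  rw [div_le_div_iff₀ hsp (by positivity)]
  nlinarith [mul_le_mul_of_nonneg_left h4 hsp.le]

/-- Explicit solution of the infinite-horizon linear-quadratic ergodic control problem
driven by a Rosenblatt process: the gain `Khat` is stabilizing and globally minimizes the
ergodic cost `L` over the stabilizing set. -/
theorem stmt_0 (H q r b₁ b₂ : ℝ)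
    (hH : 1/2 < H) (hH1 : H < 1) (hq : 0 < q) (hr : 0 < r) (hb₂ : b₂ ≠ 0) :
    let L : ℝ → ℝ := fun K =>
      Real.Gamma (2*H + 1) * (q + r * K^2) / (2 * (-(b₁ + b₂ * K)) ^ (2*H));
    let Khat : ℝ := -(b₁ + Real.sqrt (b₁^2 + 4*H*(1-H) * b₂^2 * q / r)) / (2 * b₂ * (1-H));
    b₁ + b₂ * Khat < 0 ∧
    (∀ K : ℝ, b₁ + b₂ * K < 0 → L Khat ≤ L K) ∧
    L Khat = Real.Gamma (2*H + 1) * (q + r * Khat^2) / (2 * (-(b₁ + b₂ * Khat)) ^ (2*H)) := by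
  intro L Khat
  set S := Real.sqrt (b₁^2 + 4*H*(1-H) * b₂^2 * q / r) with hS
  have h1H : 0 < 1 - H := by linarith
  have hH0 : 0 < H := by linarith
  have hb2 : 0 < b₂^2 := by positivity
  obtain ⟨Q, hQdef⟩ : ∃ Q, Q = b₂^2 * q / r := ⟨_, rfl⟩
  have hQ : 0 < Q := by rw [hQdef]; positivity
  have hS0 : 0 ≤ S := Real.sqrt_nonneg _
  have hSS : S^2 = b₁^2 + 4*H*(1-H)*Q := by
    rw [hS, Real.sq_sqrt (by positivity), hQdef]; ring
  have hkey : b₁ + b₂ * Khat = -((S + (2*H-1)*b₁) / (2*(1-H))) := by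
    simp only [Khat]; rw [← hS]; clear_value S; field_simp; ring
  obtain ⟨s, hsdef⟩ : ∃ s, s = (S + (2*H-1)*b₁) / (2*(1-H)) := ⟨_, rfl⟩
  rw [← hsdef] at hkey
  have hspos : 0 < s := by
    rw [hsdef]
    apply div_pos _ (by linarith)
    have h0 : 0 < H*(1-H)*Q := by positivity
    have h00 : 0 ≤ H*(1-H)*b₁^2 := by positivity
    have : |(2*H-1)*b₁| < S := abs_lt_of_sq_lt_sq (by rw [hSS]; nlinarith) hS0
    linarith [(abs_lt.mp this).1]
  have hSs : S = 2*(1-H)*s - (2*H-1)*b₁ := by rw [hsdef]; field_simp; ring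
  have hcrit : (1-H)*s^2 + (1-2*H)*b₁*s - H*(Q + b₁^2) = 0 := by
    rw [hSs] at hSS
    have : (1-H) * ((1-H)*s^2 + (1-2*H)*b₁*s - H*(Q + b₁^2)) = 0 := by
      linear_combination hSS/4
    exact (mul_eq_zero.mp this).resolve_left h1H.ne'
  have hL : ∀ K, L K = Real.Gamma (2*H+1) * r / (2*b₂^2) *
      (((Q + b₁^2) + 2*b₁*(-(b₁+b₂*K)) + (-(b₁+b₂*K))^2) / (-(b₁+b₂*K))^(2*H)) := by
    intro K
    have e : (Q + b₁^2) + 2*b₁*(-(b₁+b₂*K)) + (-(b₁+b₂*K))^2 = b₂^2/r * (q + r*K^2) := by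
      rw [hQdef]; field_simp; ring
    rw [e]
    simp only [L]
    generalize (-(b₁+b₂*K))^(2*H) = X
    rw [div_mul_div_comm, div_eq_mul_inv, div_eq_mul_inv, mul_inv, mul_inv, mul_inv]
    field_simp
  refine ⟨by rw [hkey]; linarith, ?_, rfl⟩
  intro K hK
  rw [hL, hL, hkey, neg_neg]
  have hG : 0 < Real.Gamma (2*H+1) := Real.Gamma_pos_of_pos (by linarith)
  apply mul_le_mul_of_nonneg_left _ (by positivity)
  exact aux_ineq H b₁ (Q + b₁^2) s _ hH hH1 (by positivity) hspos (by linarith)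
    (by nlinarith [sq_nonneg (b₁ + s)]) hcrit
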